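/- arXiv:1703.10489 — 8 statements merged into one kernel-verified Lean document; each statement's English description precedes it below -/
import Mathlib

section
/- Let n ≥ 1 and let r_1, …, r_n be positive real numbers. Define h(s) := (n+4)·s − Σ_{j=1}^n √(s² + 16·r_j) for s > 0. Then h has exactly one root in (0, ∞). -/
lemma sqrt_step (s t c : ℝ) (hs : 0 ≤ s) (hst : s ≤ t) (hc : 0 < c) :
    Real.sqrt (t ^ 2 + c) ≤ Real.sqrt (s ^ 2 + c) + (t - s) := by
  have h1 : s ≤ Real.sqrt (s ^ 2 + c) := Real.le_sqrt_of_sq_le (by linarith)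
  have h2 : Real.sqrt (s ^ 2 + c) ^ 2 = s ^ 2 + c := Real.sq_sqrt (by positivity)
  apply Real.sqrt_le_iff.2
  constructor
  · linarith
  · nlinarith [mul_nonneg (sub_nonneg.2 h1) (sub_nonneg.2 hst)]

/-- Let `n ≥ 1` and `r_1, …, r_n` be positive reals. Define
`h(s) := (n+4)·s − Σ_j √(s² + 16·r_j)` for `s > 0`. Then `h` has exactly one
root in `(0, ∞)`. -/
theorem stmt_0 (n : ℕ) (hn : 1 ≤ n) (r : Fin n → ℝ) (hr : ∀ j, 0 < r j) :
    ∃! s : ℝ, 0 < s ∧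
      ((n : ℝ) + 4) * s - ∑ j, Real.sqrt (s ^ 2 + 16 * r j) = 0 := by
  obtain ⟨h, hh⟩ : ∃ h : ℝ → ℝ, h = fun s =>
      ((n : ℝ) + 4) * s - ∑ j, Real.sqrt (s ^ 2 + 16 * r j) := ⟨_, rfl⟩
  have key : ∀ s t : ℝ, 0 ≤ s → s ≤ t → h s + 4 * (t - s) ≤ h t := by
    intro s t hs hst
    have : ∑ j, Real.sqrt (t ^ 2 + 16 * r j) ≤
        ∑ j, (Real.sqrt (s ^ 2 + 16 * r j) + (t - s)) :=
      Finset.sum_le_sum fun j _ => sqrt_step s t _ hs hst (by linarith [hr j])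
    rw [Finset.sum_add_distrib] at this
    simp only [Finset.sum_const, Finset.card_univ, Fintype.card_fin, nsmul_eq_mul] at this
    simp only [hh]
    linarith
  have h0 : h 0 < 0 := by
    have : 0 < ∑ j, Real.sqrt ((0 : ℝ) ^ 2 + 16 * r j) := by
      apply Finset.sum_pos
      · intro j _
        exact Real.sqrt_pos.2 (by linarith [hr j])
      · exact ⟨⟨0, hn⟩, Finset.mem_univ _⟩
    simp only [hh]
    linarith
  have hcont : Continuous h := by
    rw [hh]
    fun_prop
  have hS : 0 ≤ -h 0 / 4 := by linarith
  have hS2 := key 0 (-h 0 / 4) le_rfl hS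
  obtain ⟨s, hs, hs0⟩ := intermediate_value_Icc hS hcont.continuousOn
    (show (0 : ℝ) ∈ Set.Icc (h 0) (h (-h 0 / 4)) from ⟨h0.le, by linarith⟩)
  have hspos : 0 < s := by
    rcases hs.1.lt_or_eq with h1 | h1
    · exact h1
    · rw [← h1] at hs0
      linarith
  refine ⟨s, ⟨hspos, by simpa only [hh] using hs0⟩, ?_⟩
  rintro t ⟨ht, ht0⟩
  have ht1 : h t = 0 := by simpa only [hh] using ht0
  rcases le_total s t with h1 | h1
  · linarith [key s t hspos.le h1]
  · linarith [key t s ht.le h1]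
end

section
/- Let n ≥ 1, let r_1, …, r_n be positive real numbers, and let s > 0 satisfy (n+4)·s = Σ_{j=1}^n √(s² + 16·r_j). Define p_i := −s/(4·r_i) + √(s²/(16·r_i²) + 1/r_i) for i = 1, …, n. Then p_i > 0 for every i, Σ_{j=1}^n p_j·r_j = s, and for every i it holds that p_i²·r_i + (1/2)·(Σ_{j=1}^n p_j·r_j)·p_i = 1. -/
/-- Let `n ≥ 1`, let `r_1, …, r_n` be positive reals, and let
`s > 0` satisfy `(n+4)·s = Σ_j √(s² + 16·r_j)`. Define
`p_i := −s/(4·r_i) + √(s²/(16·r_i²) + 1/r_i)`. Then `p_i > 0` for every `i`,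
`Σ_j p_j·r_j = s`, and for every `i`,
`p_i²·r_i + (1/2)·(Σ_j p_j·r_j)·p_i = 1`. -/
theorem stmt_3 (n : ℕ) (hn : 1 ≤ n) (r : Fin n → ℝ) (hr : ∀ j, 0 < r j)
    (s : ℝ) (hs : 0 < s)
    (hroot : ((n : ℝ) + 4) * s = ∑ j, Real.sqrt (s ^ 2 + 16 * r j))
    (p : Fin n → ℝ)
    (hp : ∀ i, p i = -(s / (4 * r i)) +
      Real.sqrt (s ^ 2 / (16 * (r i) ^ 2) + 1 / r i)) :
    (∀ i, 0 < p i) ∧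
    (∑ j, p j * r j = s) ∧
    (∀ i, (p i) ^ 2 * r i + (1 / 2) * (∑ j, p j * r j) * p i = 1) := by
  have key : ∀ i, p i = (Real.sqrt (s ^ 2 + 16 * r i) - s) / (4 * r i) := by
    intro i
    have h := hr i
    have e : s ^ 2 / (16 * (r i) ^ 2) + 1 / r i = (s ^ 2 + 16 * r i) / (4 * r i) ^ 2 := by
      field_simp
      ring
    rw [hp i, e, Real.sqrt_div (by positivity), Real.sqrt_sq (by positivity)]
    ring
  have hsum : ∑ j, p j * r j = s := by
    have e : ∀ j, p j * r j = (Real.sqrt (s ^ 2 + 16 * r j) - s) / 4 := by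
      intro j
      have h := hr j
      rw [key j]
      field_simp
    simp only [e]
    rw [← Finset.sum_div, Finset.sum_sub_distrib, ← hroot]
    simp
    ring
  refine ⟨?_, hsum, ?_⟩
  · intro i
    have h := hr i
    rw [key i]
    have : s < Real.sqrt (s ^ 2 + 16 * r i) := Real.lt_sqrt_of_sq_lt (by linarith)
    exact div_pos (by linarith) (by linarith)
  · intro i
    have h := hr i
    have hq : Real.sqrt (s ^ 2 + 16 * r i) ^ 2 = s ^ 2 + 16 * r i :=
      Real.sq_sqrt (by positivity)
    rw [hsum, key i]
    generalize Real.sqrt (s ^ 2 + 16 * r i) = q at hq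
    field_simp
    nlinarith [hq]
end

section
/- Let n ≥ 1 and let r_1, …, r_n be positive real numbers. Then there exists exactly one vector p ∈ ℝⁿ with p_i > 0 for all i such that p_i²·r_i + (1/2)·(Σ_{j=1}^n p_j·r_j)·p_i = 1 holds for every i ∈ {1, …, n}. -/
lemma aux_mono (n : ℕ) (r : Fin n → ℝ) (hr : ∀ j, 0 < r j) (p q : Fin n → ℝ)
    (hp : ∀ i, 0 < p i) (hq : ∀ i, 0 < q i)
    (ep : ∀ i, (p i) ^ 2 * r i + (1 / 2) * (∑ j, p j * r j) * p i = 1)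
    (eq : ∀ i, (q i) ^ 2 * r i + (1 / 2) * (∑ j, q j * r j) * q i = 1)
    (h : (∑ j, p j * r j) ≤ ∑ j, q j * r j) : ∀ i, q i ≤ p i := by
  intro i
  by_contra! hlt
  have hS : 0 ≤ ∑ j, p j * r j := Finset.sum_nonneg fun j _ => (mul_pos (hp j) (hr j)).le
  have e1 := ep i
  have e2 := eq i
  have h1 : (p i) ^ 2 * r i < (q i) ^ 2 * r i := by
    have := hp i
    have := hr i
    gcongr
  have h2 : (∑ j, p j * r j) * p i ≤ (∑ j, q j * r j) * q i :=
    mul_le_mul h hlt.le (hp i).le (hS.trans h)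
  linarith

lemma aux_eq (n : ℕ) (r : Fin n → ℝ) (hr : ∀ j, 0 < r j) (p q : Fin n → ℝ)
    (hp : ∀ i, 0 < p i) (hq : ∀ i, 0 < q i)
    (ep : ∀ i, (p i) ^ 2 * r i + (1 / 2) * (∑ j, p j * r j) * p i = 1)
    (eq : ∀ i, (q i) ^ 2 * r i + (1 / 2) * (∑ j, q j * r j) * q i = 1)
    (h : (∑ j, p j * r j) ≤ ∑ j, q j * r j) : p = q := by
  have h1 := aux_mono n r hr p q hp hq ep eq h
  have h2 : (∑ j, q j * r j) ≤ ∑ j, p j * r j :=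
    Finset.sum_le_sum fun j _ => mul_le_mul_of_nonneg_right (h1 j) (hr j).le
  have h3 := aux_mono n r hr q p hq hp eq ep h2
  funext i
  exact le_antisymm (h3 i) (h1 i)

/-- Let `n ≥ 1` and let `r_1, …, r_n` be positive reals. Then
there exists exactly one vector `p ∈ ℝⁿ` with all entries positive such that
`p_i²·r_i + (1/2)·(Σ_j p_j·r_j)·p_i = 1` for every `i`. -/
theorem stmt_4 (n : ℕ) (hn : 1 ≤ n) (r : Fin n → ℝ) (hr : ∀ j, 0 < r j) :
    ∃! p : Fin n → ℝ, (∀ i, 0 < p i) ∧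
      ∀ i, (p i) ^ 2 * r i + (1 / 2) * (∑ j, p j * r j) * p i = 1 := by
  apply existsUnique_of_exists_of_unique
  · let x : Fin n → ℝ → ℝ := fun i S => (-(S / 2) + √((S / 2) ^ 2 + 4 * r i)) / 2
    have hM : 0 ≤ ∑ j, √(r j) := Finset.sum_nonneg fun j _ => Real.sqrt_nonneg _
    have hc : ContinuousOn (fun S => (∑ i, x i S) - S) (Set.Icc 0 (∑ j, √(r j))) := by
      apply Continuous.continuousOn
      simp only [x]
      fun_prop
    have h0 : 0 ≤ (∑ i, x i 0) - 0 := by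
      rw [sub_zero]
      refine Finset.sum_nonneg fun i _ => ?_
      simp only [x]
      have := Real.sqrt_nonneg ((0 / 2) ^ 2 + 4 * r i)
      linarith
    have h1 : (∑ i, x i (∑ j, √(r j))) - (∑ j, √(r j)) ≤ 0 := by
      rw [sub_nonpos]
      refine Finset.sum_le_sum fun i _ => ?_
      simp only [x]
      have h2 := Real.sqrt_nonneg (r i)
      have h3 := Real.sq_sqrt (hr i).le
      have : √(((∑ j, √(r j)) / 2) ^ 2 + 4 * r i) ≤ (∑ j, √(r j)) / 2 + 2 * √(r i) := by
        apply Real.sqrt_le_iff.2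
        constructor
        · positivity
        · nlinarith [mul_nonneg hM h2]
      linarith
    obtain ⟨S, ⟨hS0, -⟩, hS⟩ := intermediate_value_Icc' hM hc ⟨h1, h0⟩
    have hS' : ∑ i, x i S = S := sub_eq_zero.1 hS
    have hx : ∀ i, 0 < x i S := by
      intro i
      simp only [x]
      have : S / 2 < √((S / 2) ^ 2 + 4 * r i) := by
        apply Real.lt_sqrt_of_sq_lt
        linarith [hr i]
      linarith
    have hx2 : ∀ i, (x i S) ^ 2 + (1 / 2) * S * x i S = r i := by
      intro i
      simp only [x]
      have := Real.sq_sqrt (show 0 ≤ (S / 2) ^ 2 + 4 * r i by have := hr i; positivity)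
      linarith
    have hs : ∑ j, x j S / r j * r j = S := by
      refine Eq.trans ?_ hS'
      exact Finset.sum_congr rfl fun j _ => div_mul_cancel₀ _ (hr j).ne'
    refine ⟨fun i => x i S / r i, fun i => div_pos (hx i) (hr i), fun i => ?_⟩
    have hri := (hr i).ne'
    simp only [hs]
    have := hx2 i
    generalize x i S = y at *
    field_simp
    linarith
  · rintro p q ⟨hp, ep⟩ ⟨hq, eq⟩
    rcases le_total (∑ j, p j * r j) (∑ j, q j * r j) with h | h
    · exact aux_eq n r hr p q hp hq ep eq h
    · exact (aux_eq n r hr q p hq hp eq ep h).symm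
end

section
/- Let Q and R be n×n real symmetric positive definite matrices, let Q^{1/2} denote the symmetric positive definite square root of Q, and let R̃ := Q^{1/2}·R·Q^{1/2} = U·diag(r_1, …, r_n)·Uᵀ be a spectral decomposition with U orthogonal and r_i > 0. Let s > 0 be a root of h(s) := (n+4)·s − Σ_{j=1}^n √(s² + 16·r_j), and set p_i := −s/(4·r_i) + √(s²/(16·r_i²) + 1/r_i). Then the matrix P := Q^{1/2}·U·diag(p_1, …, p_n)·Uᵀ·Q^{1/2} is symmetric positive definite and satisfies the Riccati-like equation P·R·P + (1/2)·Tr(R·P)·P = Q. -/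
open Matrix

/-- Let `Q`, `R` be `n×n` real symmetric positive definite
matrices, `sqrtQ` the symmetric positive definite square root of `Q`, and let
`sqrtQ·R·sqrtQ = U·diag(r)·Uᵀ` be a spectral decomposition with `U` orthogonal
and `r_i > 0`. Let `s > 0` be a root of
`h(s) = (n+4)·s − Σ_j √(s² + 16·r_j)` and set
`p_i := −s/(4·r_i) + √(s²/(16·r_i²) + 1/r_i)`. Then
`P := sqrtQ·U·diag(p)·Uᵀ·sqrtQ` is symmetric positive definite and satisfies
`P·R·P + (1/2)·Tr(R·P)·P = Q`. -/
theorem stmt_5 (n : ℕ) (Q R : Matrix (Fin n) (Fin n) ℝ)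
    (hQsym : Qᵀ = Q) (hRsym : Rᵀ = R) (hQ : Q.PosDef) (hR : R.PosDef)
    (sqrtQ : Matrix (Fin n) (Fin n) ℝ) (hsqrtQsym : sqrtQᵀ = sqrtQ)
    (hsqrtQ : sqrtQ.PosDef) (hsqrtQsq : sqrtQ * sqrtQ = Q)
    (U : Matrix (Fin n) (Fin n) ℝ) (hU : U * Uᵀ = 1)
    (r : Fin n → ℝ) (hr : ∀ i, 0 < r i)
    (hspec : sqrtQ * R * sqrtQ = U * Matrix.diagonal r * Uᵀ)
    (s : ℝ) (hs : 0 < s)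
    (hroot : ((n : ℝ) + 4) * s - ∑ j, Real.sqrt (s ^ 2 + 16 * r j) = 0)
    (p : Fin n → ℝ)
    (hp : ∀ i, p i = -(s / (4 * r i)) +
      Real.sqrt (s ^ 2 / (16 * (r i) ^ 2) + 1 / r i))
    (P : Matrix (Fin n) (Fin n) ℝ)
    (hP : P = sqrtQ * U * Matrix.diagonal p * Uᵀ * sqrtQ) :
    Pᵀ = P ∧ P.PosDef ∧
      P * R * P + ((1 : ℝ) / 2 * Matrix.trace (R * P)) • P = Q := by
  have hU' : Uᵀ * U = 1 := mul_eq_one_comm.mp hU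
  have hsq : ∀ i, Real.sqrt (s ^ 2 / (16 * (r i) ^ 2) + 1 / r i)
      = Real.sqrt (s ^ 2 + 16 * r i) / (4 * r i) := by
    intro i
    have hri := hr i
    have h1 : s ^ 2 / (16 * (r i) ^ 2) + 1 / r i = (s ^ 2 + 16 * r i) / (4 * r i) ^ 2 := by
      field_simp
      ring
    rw [h1, Real.sqrt_div (by positivity), Real.sqrt_sq (by positivity)]
  have hrp : ∀ i, r i * p i = (Real.sqrt (s ^ 2 + 16 * r i) - s) / 4 := by
    intro i
    have hri := hr i
    rw [hp, hsq]
    field_simp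
    ring
  have hppos : ∀ i, 0 < p i := by
    intro i
    have hri := hr i
    have h2 : s < Real.sqrt (s ^ 2 + 16 * r i) :=
      Real.lt_sqrt_of_sq_lt (by linarith)
    have h3 : 0 < r i * p i := by rw [hrp]; linarith
    exact (mul_pos_iff_of_pos_left hri).mp h3
  have hquad : ∀ i, p i * r i * p i + s / 2 * p i = 1 := by
    intro i
    have hri := hr i
    have h2 : Real.sqrt (s ^ 2 + 16 * r i) ^ 2 = s ^ 2 + 16 * r i :=
      Real.sq_sqrt (by positivity)
    have h3 : Real.sqrt (s ^ 2 + 16 * r i) = 4 * (r i * p i) + s := by rw [hrp]; ring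
    rw [h3] at h2
    apply mul_left_cancel₀ hri.ne'
    linarith
  have hsum : ∑ i, r i * p i = s := by
    simp_rw [hrp]
    rw [← Finset.sum_div, Finset.sum_sub_distrib]
    simp only [Finset.sum_const, Finset.card_univ, Fintype.card_fin, nsmul_eq_mul]
    linarith
  have htr : Matrix.trace (R * P) = s := by
    have h1 : R * P = (R * sqrtQ * U * Matrix.diagonal p * Uᵀ) * sqrtQ := by
      rw [hP]; simp only [Matrix.mul_assoc]
    rw [h1, Matrix.trace_mul_comm]
    have h2 : sqrtQ * (R * sqrtQ * U * Matrix.diagonal p * Uᵀ)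
        = (U * (Matrix.diagonal r * Matrix.diagonal p)) * Uᵀ := by
      calc _ = (sqrtQ * R * sqrtQ) * U * Matrix.diagonal p * Uᵀ := by
            simp only [Matrix.mul_assoc]
        _ = U * Matrix.diagonal r * (Uᵀ * U) * Matrix.diagonal p * Uᵀ := by
            rw [hspec]; simp only [Matrix.mul_assoc]
        _ = _ := by rw [hU']; simp only [Matrix.mul_assoc, Matrix.one_mul]
    rw [h2, Matrix.trace_mul_comm, ← Matrix.mul_assoc, hU', Matrix.one_mul,
      Matrix.diagonal_mul_diagonal, Matrix.trace_diagonal, hsum]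
  have hPRP : P * R * P = sqrtQ * U * Matrix.diagonal (fun i => p i * r i * p i) * Uᵀ * sqrtQ := by
    calc P * R * P = sqrtQ * U * Matrix.diagonal p * Uᵀ * (sqrtQ * R * sqrtQ) * U
          * Matrix.diagonal p * Uᵀ * sqrtQ := by
            rw [hP]; simp only [Matrix.mul_assoc]
      _ = sqrtQ * U * Matrix.diagonal p * (Uᵀ * U) * Matrix.diagonal r * (Uᵀ * U)
          * Matrix.diagonal p * Uᵀ * sqrtQ := by
            rw [hspec]; simp only [Matrix.mul_assoc]
      _ = sqrtQ * U * (Matrix.diagonal p * Matrix.diagonal r * Matrix.diagonal p)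
          * Uᵀ * sqrtQ := by
            rw [hU']; simp only [Matrix.mul_assoc, Matrix.one_mul]
      _ = _ := by rw [Matrix.diagonal_mul_diagonal, Matrix.diagonal_mul_diagonal]
  refine ⟨?_, ?_, ?_⟩
  · rw [hP]
    simp only [Matrix.transpose_mul, Matrix.transpose_transpose, Matrix.diagonal_transpose,
      hsqrtQsym, Matrix.mul_assoc]
  · have hM : IsUnit (sqrtQ * U) :=
      hsqrtQ.isUnit.mul (IsUnit.of_mul_eq_one _ hU)
    have h1 : P = (sqrtQ * U) * Matrix.diagonal p * star (sqrtQ * U) := by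
      rw [hP, Matrix.star_eq_conjTranspose, Matrix.conjTranspose_eq_transpose_of_trivial,
        Matrix.transpose_mul, hsqrtQsym]
      simp only [Matrix.mul_assoc]
    rw [h1, Matrix.IsUnit.posDef_star_right_conjugate_iff hM]
    exact Matrix.PosDef.diagonal hppos
  · rw [htr, hPRP, hP]
    have h1 : (1 / 2 * s) • (sqrtQ * U * Matrix.diagonal p * Uᵀ * sqrtQ)
        = sqrtQ * U * ((1 / 2 * s) • Matrix.diagonal p) * Uᵀ * sqrtQ := by
      simp only [Matrix.mul_smul, Matrix.smul_mul]
    rw [h1, ← Matrix.add_mul, ← Matrix.add_mul, ← Matrix.mul_add]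
    have h2 : Matrix.diagonal (fun i => p i * r i * p i) + (1 / 2 * s) • Matrix.diagonal p
        = (1 : Matrix (Fin n) (Fin n) ℝ) := by
      rw [← Matrix.diagonal_smul, Matrix.diagonal_add, ← Matrix.diagonal_one]
      congr 1
      funext i
      have := hquad i
      simp only [Pi.smul_apply, smul_eq_mul]
      linarith
    rw [h2, Matrix.mul_one, Matrix.mul_assoc sqrtQ, hU, Matrix.mul_one, hsqrtQsq]
end

section
/- Let Q and R be n×n real symmetric positive definite matrices. Then there is at most one n×n real symmetric positive definite matrix P satisfying the Riccati-like equation P·R·P + (1/2)·Tr(R·P)·P = Q. -/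
open Matrix

lemma aux_psd (n : ℕ) (B X Y : Matrix (Fin n) (Fin n) ℝ) (hXs : Xᵀ = X) (hYs : Yᵀ = Y)
    (hX : X.PosDef) (hY : Y.PosDef) (s t : ℝ) (hst : t ≤ s) (ht : 0 ≤ t)
    (h : X * (Bᵀ * B) * X + s • X = Y * (Bᵀ * B) * Y + t • Y) :
    (B * (Y - X) * Bᵀ).PosSemidef := by
  have hH : (B * (Y - X) * Bᵀ).IsHermitian := by
    simp [Matrix.IsHermitian, conjTranspose_eq_transpose_of_trivial, transpose_mul, hXs, hYs,
      Matrix.mul_assoc]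
  rw [hH.posSemidef_iff_eigenvalues_nonneg]
  intro i
  by_contra hneg
  simp only [Pi.zero_apply, not_le] at hneg
  have hev := hH.mulVec_eigenvectorBasis i
  have hu0 : (⇑(hH.eigenvectorBasis i) : Fin n → ℝ) ≠ 0 := by
    intro h0
    apply hH.eigenvectorBasis.orthonormal.ne_zero i
    ext j
    exact congrFun h0 j
  generalize hH.eigenvalues i = l at hev hneg
  generalize (⇑(hH.eigenvectorBasis i) : Fin n → ℝ) = u at hev hu0
  obtain ⟨v, hv⟩ : ∃ v, v = Bᵀ *ᵥ u := ⟨_, rfl⟩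
  have hev1 : B *ᵥ ((Y - X) *ᵥ v) = l • u := by
    rw [hv, mulVec_mulVec, mulVec_mulVec, hev]
  have hv0 : v ≠ 0 := by
    intro h0
    rw [h0, mulVec_zero, mulVec_zero] at hev1
    exact (smul_ne_zero hneg.ne hu0) hev1.symm
  have hR : (Bᵀ * B) *ᵥ ((Y - X) *ᵥ v) = l • v := by
    rw [← mulVec_mulVec, hev1, mulVec_smul, hv]
  have hXv : 0 < v ⬝ᵥ (X *ᵥ v) := by simpa using hX.dotProduct_mulVec_pos hv0
  have hYv : 0 < v ⬝ᵥ (Y *ᵥ v) := by simpa using hY.dotProduct_mulVec_pos hv0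
  have hD : v ⬝ᵥ ((Y - X) *ᵥ v) = l * (u ⬝ᵥ u) := by
    conv_lhs => rw [hv, mulVec_transpose, ← dotProduct_mulVec, ← mulVec_transpose, ← hv, hev1]
    simp
  have huu : 0 ≤ u ⬝ᵥ u := by
    simpa using dotProduct_star_self_nonneg u
  have h1 : Y * ((Bᵀ * B) * (Y - X)) + ((Y - X) * (Bᵀ * B)) * X + t • (Y - X) = (s - t) • X := by
    have : s • X = Y * (Bᵀ * B) * Y + t • Y - X * (Bᵀ * B) * X := by rw [← h]; abel
    rw [sub_smul, this, smul_sub]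
    noncomm_ring
  have hA : v ⬝ᵥ ((Y * ((Bᵀ * B) * (Y - X))) *ᵥ v) = l * (v ⬝ᵥ (Y *ᵥ v)) := by
    rw [← mulVec_mulVec, ← mulVec_mulVec, hR, mulVec_smul]; simp
  have hT : v ᵥ* ((Y - X) * (Bᵀ * B)) = l • v := by
    rw [← hR, mulVec_mulVec, ← mulVec_transpose]
    simp [transpose_mul, hXs, hYs]
  have hC : v ⬝ᵥ ((((Y - X) * (Bᵀ * B)) * X) *ᵥ v) = l * (v ⬝ᵥ (X *ᵥ v)) := by
    rw [← mulVec_mulVec, dotProduct_mulVec, hT]; simp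
  have h2 := congrArg (fun M => v ⬝ᵥ (M *ᵥ v)) h1
  simp only [add_mulVec, dotProduct_add, hA, hC, smul_mulVec, dotProduct_smul, hD,
    smul_eq_mul] at h2
  have a1 := mul_neg_of_neg_of_pos hneg hXv
  have a2 := mul_neg_of_neg_of_pos hneg hYv
  have a3 : t * (l * (u ⬝ᵥ u)) ≤ 0 :=
    mul_nonpos_of_nonneg_of_nonpos ht (mul_nonpos_of_nonpos_of_nonneg hneg.le huu)
  have a4 := mul_nonneg (sub_nonneg.2 hst) hXv.le
  linarith

lemma aux_eq_s6 (n : ℕ) (B X Y : Matrix (Fin n) (Fin n) ℝ) (hXs : Xᵀ = X) (hYs : Yᵀ = Y)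
    (hB : IsUnit B)
    (hX : X.PosDef) (hY : Y.PosDef) (hst : trace (Bᵀ * B * Y) ≤ trace (Bᵀ * B * X))
    (h : X * (Bᵀ * B) * X + ((1 : ℝ) / 2 * trace (Bᵀ * B * X)) • X
      = Y * (Bᵀ * B) * Y + ((1 : ℝ) / 2 * trace (Bᵀ * B * Y)) • Y) : X = Y := by
  have htr : ∀ Z : Matrix (Fin n) (Fin n) ℝ, trace (B * Z * Bᵀ) = trace (Bᵀ * B * Z) := by
    intro Z
    rw [trace_mul_comm, Matrix.mul_assoc]
  have ht : 0 ≤ trace (Bᵀ * B * Y) := by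
    rw [← htr]
    have := (hY.posSemidef.mul_mul_conjTranspose_same B).trace_nonneg
    simpa [conjTranspose_eq_transpose_of_trivial] using this
  have hp := aux_psd n B X Y hXs hYs hX hY _ _ (by linarith) (by linarith) h
  have h0 : trace (B * (Y - X) * Bᵀ) = 0 := by
    apply le_antisymm _ hp.trace_nonneg
    rw [htr, Matrix.mul_sub, trace_sub]
    linarith
  rw [hp.trace_eq_zero_iff] at h0
  have hBt : IsUnit Bᵀ := by
    simpa [Matrix.isUnit_iff_isUnit_det] using hB
  have h3 := (hBt.mul_left_eq_zero).1 h0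
  have h4 := (hB.mul_right_eq_zero).1 h3
  exact (sub_eq_zero.1 h4).symm

/-- Let `Q` and `R` be `n×n` real symmetric positive definite
matrices. Then there is at most one `n×n` real symmetric positive definite
matrix `P` satisfying `P·R·P + (1/2)·Tr(R·P)·P = Q`. -/
theorem stmt_6 (n : ℕ) (Q R : Matrix (Fin n) (Fin n) ℝ)
    (hQsym : Qᵀ = Q) (hRsym : Rᵀ = R) (hQ : Q.PosDef) (hR : R.PosDef) :
    ∀ P₁ P₂ : Matrix (Fin n) (Fin n) ℝ,
      P₁ᵀ = P₁ → P₁.PosDef →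
      P₂ᵀ = P₂ → P₂.PosDef →
      P₁ * R * P₁ + ((1 : ℝ) / 2 * Matrix.trace (R * P₁)) • P₁ = Q →
      P₂ * R * P₂ + ((1 : ℝ) / 2 * Matrix.trace (R * P₂)) • P₂ = Q →
      P₁ = P₂ := by
  intro X Y hXs hX hYs hY h1 h2
  obtain ⟨B, hB, rfl⟩ : ∃ B : Matrix (Fin n) (Fin n) ℝ, IsUnit B ∧ R = Bᵀ * B := by
    open scoped MatrixOrder in
    obtain ⟨B, hB⟩ := CStarAlgebra.nonneg_iff_eq_star_mul_self.1 hR.posSemidef.nonneg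
    have hB' : R = Bᵀ * B := by
      simpa [star_eq_conjTranspose, conjTranspose_eq_transpose_of_trivial] using hB
    refine ⟨B, ?_, hB'⟩
    have hd := hR.det_pos
    rw [hB', det_mul] at hd
    rw [Matrix.isUnit_iff_isUnit_det, isUnit_iff_ne_zero]
    intro h0
    simp [h0] at hd
  rcases le_total (trace (Bᵀ * B * Y)) (trace (Bᵀ * B * X)) with h | h
  · exact aux_eq_s6 n B X Y hXs hYs hB hX hY h (h1.trans h2.symm)
  · exact (aux_eq_s6 n B Y X hYs hXs hB hY hX h (h2.trans h1.symm)).symm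
end

section
/- Let Q and R be n×n real symmetric positive definite matrices, let Q^{1/2} denote the symmetric positive definite square root of Q, and let Q^{1/2}·R·Q^{1/2} = U·R̄·Uᵀ be a spectral decomposition with U orthogonal and R̄ diagonal with positive diagonal entries. Then a symmetric matrix P satisfies P·R·P + (1/2)·Tr(R·P)·P = Q if and only if the matrix P̄ := Uᵀ·Q^{−1/2}·P·Q^{−1/2}·U satisfies P̄·R̄·P̄ + (1/2)·Tr(R̄·P̄)·P̄ = I. -/
open Matrix

/-- Let `Q`, `R` be `n×n` real symmetric positive definite
matrices, `sqrtQ` the symmetric positive definite square root of `Q`, and let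
`sqrtQ·R·sqrtQ = U·R̄·Uᵀ` be a spectral decomposition with `U` orthogonal and
`R̄` diagonal with positive entries. Then a symmetric matrix `P` satisfies
`P·R·P + (1/2)·Tr(R·P)·P = Q` if and only if
`P̄ := Uᵀ·sqrtQ⁻¹·P·sqrtQ⁻¹·U` satisfies `P̄·R̄·P̄ + (1/2)·Tr(R̄·P̄)·P̄ = I`. -/
theorem stmt_7 (n : ℕ) (Q R : Matrix (Fin n) (Fin n) ℝ)
    (hQsym : Qᵀ = Q) (hRsym : Rᵀ = R) (hQ : Q.PosDef) (hR : R.PosDef)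
    (sqrtQ : Matrix (Fin n) (Fin n) ℝ) (hsqrtQsym : sqrtQᵀ = sqrtQ)
    (hsqrtQ : sqrtQ.PosDef) (hsqrtQsq : sqrtQ * sqrtQ = Q)
    (U : Matrix (Fin n) (Fin n) ℝ) (hU : U * Uᵀ = 1)
    (r : Fin n → ℝ) (hr : ∀ i, 0 < r i)
    (hspec : sqrtQ * R * sqrtQ = U * Matrix.diagonal r * Uᵀ)
    (P : Matrix (Fin n) (Fin n) ℝ) (hPsym : Pᵀ = P)
    (Pbar : Matrix (Fin n) (Fin n) ℝ)
    (hPbar : Pbar = Uᵀ * sqrtQ⁻¹ * P * sqrtQ⁻¹ * U) :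
    (P * R * P + ((1 : ℝ) / 2 * Matrix.trace (R * P)) • P = Q) ↔
    (Pbar * Matrix.diagonal r * Pbar +
      ((1 : ℝ) / 2 * Matrix.trace (Matrix.diagonal r * Pbar)) • Pbar = 1) := by
  have hU' : Uᵀ * U = 1 := mul_eq_one_comm.mp hU
  have hdet : IsUnit sqrtQ.det := (Matrix.isUnit_iff_isUnit_det _).mp hsqrtQ.isUnit
  have hST : sqrtQ * sqrtQ⁻¹ = 1 := Matrix.mul_nonsing_inv _ hdet
  have hTS : sqrtQ⁻¹ * sqrtQ = 1 := Matrix.nonsing_inv_mul _ hdet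
  generalize sqrtQ⁻¹ = T at *
  obtain ⟨A, hA⟩ : ∃ A, A = sqrtQ * U := ⟨_, rfl⟩
  obtain ⟨B, hB⟩ : ∃ B, B = Uᵀ * T := ⟨_, rfl⟩
  obtain ⟨C, hC⟩ : ∃ C, C = Uᵀ * sqrtQ := ⟨_, rfl⟩
  obtain ⟨D, hD⟩ : ∃ D, D = T * U := ⟨_, rfl⟩
  have hAB : A * B = 1 := by
    rw [hA, hB, Matrix.mul_assoc, ← Matrix.mul_assoc U, hU, Matrix.one_mul, hST]
  have hBA : B * A = 1 := mul_eq_one_comm.mp hAB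
  have hDC : D * C = 1 := by
    rw [hD, hC, Matrix.mul_assoc, ← Matrix.mul_assoc U, hU, Matrix.one_mul, hTS]
  have hCD : C * D = 1 := mul_eq_one_comm.mp hDC
  have hAC : A * C = Q := by
    rw [hA, hC, Matrix.mul_assoc, ← Matrix.mul_assoc U, hU, Matrix.one_mul, hsqrtQsq]
  have hP : Pbar = B * P * D := by
    rw [hPbar, hB, hD]; simp only [Matrix.mul_assoc]
  have hL : Matrix.diagonal r = C * R * A := by
    calc Matrix.diagonal r = (Uᵀ * U) * Matrix.diagonal r * (Uᵀ * U) := by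
          rw [hU', Matrix.one_mul, Matrix.mul_one]
      _ = Uᵀ * (U * Matrix.diagonal r * Uᵀ) * U := by simp only [Matrix.mul_assoc]
      _ = C * R * A := by rw [← hspec, hC, hA]; simp only [Matrix.mul_assoc]
  have htr : Matrix.trace (Matrix.diagonal r * Pbar) = Matrix.trace (R * P) := by
    have h1 : Matrix.diagonal r * Pbar = C * (R * P * D) := by
      calc Matrix.diagonal r * Pbar = C * (R * (A * B) * P * D) := by
            rw [hL, hP]; simp only [Matrix.mul_assoc]
        _ = _ := by rw [hAB, Matrix.mul_one]
    rw [h1, Matrix.trace_mul_comm, Matrix.mul_assoc, hDC, Matrix.mul_one]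
  have hquad : Pbar * Matrix.diagonal r * Pbar = B * (P * R * P) * D := by
    calc Pbar * Matrix.diagonal r * Pbar = B * (P * (D * C) * R * (A * B) * P) * D := by
          rw [hL, hP]; simp only [Matrix.mul_assoc]
      _ = _ := by rw [hAB, hDC, Matrix.mul_one, Matrix.mul_one]
  have hlhs : ∀ c : ℝ, Pbar * Matrix.diagonal r * Pbar + c • Pbar
      = B * (P * R * P + c • P) * D := by
    intro c
    rw [hquad, hP, Matrix.mul_add, Matrix.add_mul, Matrix.mul_smul, Matrix.smul_mul]
  rw [htr, hlhs]
  generalize P * R * P + ((1 : ℝ) / 2 * Matrix.trace (R * P)) • P = X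
  constructor
  · intro h
    rw [h, ← hAC, ← Matrix.mul_assoc, hBA, Matrix.one_mul, hCD]
  · intro h
    calc X = (A * B) * X * (D * C) := by rw [hAB, hDC, Matrix.one_mul, Matrix.mul_one]
      _ = A * (B * X * D) * C := by simp only [Matrix.mul_assoc]
      _ = Q := by rw [h, Matrix.mul_one, hAC]
end

section
/- Let n ≥ 2 and let P, Q, R be n×n real symmetric positive definite matrices satisfying the Riccati-like equation P·R·P + (1/2)·Tr(R·P)·P = Q. Then the performance ratio J_ratio := 2·Tr(R·Q)/[Tr(R·P)]² satisfies 1 + 2/n ≤ J_ratio < 3. -/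
open Matrix

theorem aux_trace_sq {n : ℕ} {M : Matrix (Fin n) (Fin n) ℝ} (hM : M.IsHermitian) :
    (M * M).trace = ∑ i, hM.eigenvalues i ^ 2 := by
  conv_lhs => rw [hM.spectral_theorem, ← map_mul, Unitary.conjStarAlgAut_apply, trace_mul_comm,
    ← mul_assoc]
  simp [Matrix.trace_diagonal, pow_two]

open scoped MatrixOrder in
theorem aux_eig {n : ℕ} {P R : Matrix (Fin n) (Fin n) ℝ} (hP : P.PosDef) (hR : R.PosDef) :
    ∃ l : Fin n → ℝ, (∀ i, 0 < l i) ∧ (R * P).trace = ∑ i, l i ∧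
      (R * (P * R * P)).trace = ∑ i, l i ^ 2 := by
  obtain ⟨B, hB⟩ := CStarAlgebra.nonneg_iff_eq_star_mul_self.mp hR.posSemidef.nonneg
  have hBu : IsUnit B := by
    have h := hR.isUnit
    rw [hB, isUnit_iff_isUnit_det, det_mul] at h
    rw [isUnit_iff_isUnit_det]
    exact isUnit_of_mul_isUnit_right h
  have hM : (B * P * star B).PosDef := (Matrix.IsUnit.posDef_star_right_conjugate_iff hBu).2 hP
  refine ⟨hM.isHermitian.eigenvalues, hM.eigenvalues_pos, ?_, ?_⟩
  · have h := hM.isHermitian.trace_eq_sum_eigenvalues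
    rw [trace_mul_comm, ← mul_assoc, ← hB] at h
    simpa using h
  · rw [← aux_trace_sq hM.isHermitian, hB, mul_assoc (star B), trace_mul_comm (star B)]
    simp only [mul_assoc]

/-- Let `n ≥ 2` and let `P, Q, R` be `n×n` real symmetric
positive definite matrices satisfying `P·R·P + (1/2)·Tr(R·P)·P = Q`. Then the
performance ratio `J_ratio := 2·Tr(R·Q)/[Tr(R·P)]²` satisfies
`1 + 2/n ≤ J_ratio < 3`. -/
theorem stmt_12 (n : ℕ) (hn : 2 ≤ n) (P Q R : Matrix (Fin n) (Fin n) ℝ)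
    (hPsym : Pᵀ = P) (hQsym : Qᵀ = Q) (hRsym : Rᵀ = R)
    (hP : P.PosDef) (hQ : Q.PosDef) (hR : R.PosDef)
    (hric : P * R * P + ((1 : ℝ) / 2 * Matrix.trace (R * P)) • P = Q) :
    1 + 2 / (n : ℝ) ≤ 2 * Matrix.trace (R * Q) / (Matrix.trace (R * P)) ^ 2 ∧
    2 * Matrix.trace (R * Q) / (Matrix.trace (R * P)) ^ 2 < 3 := by
  obtain ⟨l, hl, h1, h2⟩ := aux_eig hP hR
  have hn0 : (0 : ℝ) < n := by exact_mod_cast (by omega : 0 < n)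
  haveI : Nontrivial (Fin n) := Fin.nontrivial_iff_two_le.2 hn
  have htr : (R * Q).trace = ∑ i, l i ^ 2 + 1 / 2 * (∑ i, l i) ^ 2 := by
    rw [← hric, mul_add, trace_add, h2, mul_smul_comm, trace_smul, h1, smul_eq_mul]
    ring
  have hpos : 0 < ∑ i, l i := Finset.sum_pos (fun i _ => hl i) Finset.univ_nonempty
  have hlo : (∑ i, l i) ^ 2 ≤ n * ∑ i, l i ^ 2 := by
    simpa using sq_sum_le_card_mul_sum_sq (s := Finset.univ) (f := l)
  have hhi : ∑ i, l i ^ 2 < (∑ i, l i) ^ 2 := by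
    rw [pow_two (∑ i, l i), Finset.sum_mul]
    refine Finset.sum_lt_sum_of_nonempty Finset.univ_nonempty fun i _ => ?_
    rw [pow_two]
    refine mul_lt_mul_of_pos_left ?_ (hl i)
    obtain ⟨j, hj⟩ := exists_ne i
    exact Finset.single_lt_sum hj (Finset.mem_univ i) (Finset.mem_univ j) (hl j)
      fun k _ _ => (hl k).le
  rw [htr, h1]
  generalize ∑ i, l i ^ 2 = s at *
  generalize ∑ i, l i = t at *
  constructor
  · rw [le_div_iff₀ (by positivity)]
    have : t ^ 2 / n ≤ s := by rw [div_le_iff₀ hn0]; linarith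
    have e : (1 + 2 / (n : ℝ)) * t ^ 2 = t ^ 2 + 2 * (t ^ 2 / n) := by ring
    rw [e]; linarith
  · rw [div_lt_iff₀ (by positivity)]
    linarith
end

section
/- Let n ≥ 2 and let P, Q, R be n×n real symmetric positive definite matrices satisfying the Riccati-like equation P·R·P + (1/2)·Tr(R·P)·P = Q. Then the performance ratio J_ratio := 2·Tr(R·Q)/[Tr(R·P)]² equals 1 + 2/n if and only if all eigenvalues of the matrix R·Q are identical (equivalently, if and only if all eigenvalues of R·P are identical). -/
open Matrix

open scoped MatrixOrder in
/-- `R * P` is similar to a positive definite matrix. -/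
lemma aux_decomp {n : ℕ} {P R : Matrix (Fin n) (Fin n) ℝ} (hP : P.PosDef) (hR : R.PosDef) :
    ∃ (u : (Matrix (Fin n) (Fin n) ℝ)ˣ) (S : Matrix (Fin n) (Fin n) ℝ), S.PosDef ∧
      R * P = u * S * (u⁻¹ : (Matrix (Fin n) (Fin n) ℝ)ˣ) := by
  obtain ⟨B, hB⟩ := CStarAlgebra.nonneg_iff_eq_star_mul_self.mp hR.posSemidef.nonneg
  have hu : IsUnit B := by
    have h := hR.isUnit
    rw [hB, Matrix.isUnit_iff_isUnit_det, Matrix.det_mul] at h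
    rw [Matrix.isUnit_iff_isUnit_det]
    exact isUnit_of_mul_isUnit_right h
  obtain ⟨u, hu'⟩ := hu.star
  refine ⟨u, B * P * star B, (Matrix.IsUnit.posDef_star_right_conjugate_iff hu).2 hP, ?_⟩
  rw [← hu', Units.eq_mul_inv_iff_mul_eq, hB, ← hu']
  simp only [mul_assoc]

/-- Real spectrum constant implies scalar. -/
lemma aux_scalar {n : ℕ} (hn : 2 ≤ n) {P R : Matrix (Fin n) (Fin n) ℝ} (hP : P.PosDef)
    (hR : R.PosDef)
    (h : ∀ μ ∈ spectrum ℝ (R * P), ∀ ν ∈ spectrum ℝ (R * P), μ = ν) :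
    ∃ c : ℝ, R * P = c • (1 : Matrix (Fin n) (Fin n) ℝ) := by
  obtain ⟨u, S, hS, hRP⟩ := aux_decomp hP hR
  rw [hRP, spectrum.units_conjugate, hS.1.spectrum_real_eq_range_eigenvalues] at h
  let i0 : Fin n := ⟨0, by omega⟩
  refine ⟨hS.1.eigenvalues i0, ?_⟩
  have hS1 : S = hS.1.eigenvalues i0 • (1 : Matrix (Fin n) (Fin n) ℝ) := by
    have h1 : diagonal (RCLike.ofReal ∘ hS.1.eigenvalues)
        = hS.1.eigenvalues i0 • (1 : Matrix (Fin n) (Fin n) ℝ) := by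
      rw [Matrix.smul_one_eq_diagonal]
      congr 1
      funext i
      simpa using h _ ⟨i, rfl⟩ _ ⟨i0, rfl⟩
    have h2 := hS.1.spectral_theorem
    rw [h1, map_smul, map_one] at h2
    exact h2
  rw [hRP]
  generalize hS.1.eigenvalues i0 = c at hS1
  rw [hS1]
  simp

lemma aux_pos {n : ℕ} {P R : Matrix (Fin n) (Fin n) ℝ} (hP : P.PosDef)
    (hR : R.PosDef) {μ : ℝ} (h : μ ∈ spectrum ℝ (R * P)) : 0 < μ := by
  obtain ⟨u, S, hS, hRP⟩ := aux_decomp hP hR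
  rw [hRP, spectrum.units_conjugate, hS.1.spectrum_real_eq_range_eigenvalues] at h
  obtain ⟨i, rfl⟩ := h
  exact hS.eigenvalues_pos i

lemma aux_complex {n : ℕ} {A : Matrix (Fin n) (Fin n) ℝ} {μ : ℝ} (h : μ ∈ spectrum ℝ A) :
    (μ : ℂ) ∈ spectrum ℂ (A.map (Complex.ofReal ·)) := by
  rw [spectrum.mem_iff, Matrix.isUnit_iff_isUnit_det, isUnit_iff_ne_zero, not_not] at h ⊢
  have h1 := congrArg Complex.ofRealHom h
  rw [RingHom.map_det, map_zero] at h1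
  rw [← h1]
  congr 1
  ext i j
  by_cases hij : i = j <;> simp [Matrix.algebraMap_matrix_apply, hij]

lemma aux_const {n : ℕ} (hn : 2 ≤ n) {P R : Matrix (Fin n) (Fin n) ℝ} (hP : P.PosDef)
    (hR : R.PosDef) :
    (∀ μ ∈ spectrum ℂ ((R * P).map (Complex.ofReal ·)),
        ∀ ν ∈ spectrum ℂ ((R * P).map (Complex.ofReal ·)), μ = ν) ↔
    ∃ c : ℝ, R * P = c • (1 : Matrix (Fin n) (Fin n) ℝ) := by
  constructor
  · intro h
    refine aux_scalar hn hP hR fun μ hμ ν hν => ?_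
    exact_mod_cast h _ (aux_complex hμ) _ (aux_complex hν)
  · rintro ⟨c, hc⟩
    haveI : Nonempty (Fin n) := ⟨⟨0, by omega⟩⟩
    have h1 : (R * P).map (Complex.ofReal ·)
        = algebraMap ℂ (Matrix (Fin n) (Fin n) ℂ) (c : ℂ) := by
      rw [hc]
      ext i j
      by_cases hij : i = j <;> simp [Matrix.algebraMap_matrix_apply, hij]
    rw [h1, spectrum.scalar_eq]
    rintro μ rfl ν rfl
    rfl

lemma aux_trace {n : ℕ} (hn : 2 ≤ n) {P R : Matrix (Fin n) (Fin n) ℝ} (hP : P.PosDef)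
    (hR : R.PosDef) :
    n * trace (R * P * (R * P)) = trace (R * P) ^ 2 ↔
    ∃ c : ℝ, R * P = c • (1 : Matrix (Fin n) (Fin n) ℝ) := by
  have hn0 : (n : ℝ) ≠ 0 := by positivity
  constructor
  · intro h
    obtain ⟨u, S, hS, hRP⟩ := aux_decomp hP hR
    have ht : trace (R * P) = trace S := by
      rw [hRP, Matrix.trace_mul_comm, ← mul_assoc]; simp
    have ht2 : trace (R * P * (R * P)) = trace (S * S) := by
      have : R * P * (R * P) = u * (S * S) * (u⁻¹ : (Matrix (Fin n) (Fin n) ℝ)ˣ) := by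
        rw [hRP]; simp [mul_assoc]
      rw [this, Matrix.trace_mul_comm, ← mul_assoc]; simp
    rw [ht, ht2] at h
    refine ⟨trace S / n, ?_⟩
    set c := trace S / n with hc
    have hD : S - c • (1 : Matrix (Fin n) (Fin n) ℝ) = 0 := by
      rw [← Matrix.trace_conjTranspose_mul_self_eq_zero_iff]
      have hs : Sᴴ = S := hS.1
      rw [conjTranspose_sub, hs, conjTranspose_smul, conjTranspose_one]
      simp only [sub_mul, mul_sub, trace_sub, Matrix.smul_mul, Matrix.mul_smul, one_mul, mul_one,
        trace_smul, trace_one, Fintype.card_fin, smul_eq_mul, star_trivial]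
      rw [hc]
      field_simp
      linear_combination h
    rw [hRP, sub_eq_zero.1 hD]
    simp
  · rintro ⟨c, hc⟩
    rw [hc]
    simp
    ring


/-- Let `n ≥ 2` and let `P, Q, R` be `n×n` real symmetric
positive definite matrices satisfying `P·R·P + (1/2)·Tr(R·P)·P = Q`. Then the
performance ratio `J_ratio := 2·Tr(R·Q)/[Tr(R·P)]²` equals `1 + 2/n` if and
only if all eigenvalues of `R·Q` are identical (equivalently, iff all
eigenvalues of `R·P` are identical), eigenvalues being the elements of the
spectrum of the complexified matrices. -/
theorem stmt_14 (n : ℕ) (hn : 2 ≤ n) (P Q R : Matrix (Fin n) (Fin n) ℝ)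
    (hPsym : Pᵀ = P) (hQsym : Qᵀ = Q) (hRsym : Rᵀ = R)
    (hP : P.PosDef) (hQ : Q.PosDef) (hR : R.PosDef)
    (hric : P * R * P + ((1 : ℝ) / 2 * Matrix.trace (R * P)) • P = Q) :
    (2 * Matrix.trace (R * Q) / (Matrix.trace (R * P)) ^ 2 = 1 + 2 / (n : ℝ) ↔
      ∀ μ ∈ spectrum ℂ ((R * Q).map (Complex.ofReal ·)),
        ∀ ν ∈ spectrum ℂ ((R * Q).map (Complex.ofReal ·)), μ = ν) ∧
    (2 * Matrix.trace (R * Q) / (Matrix.trace (R * P)) ^ 2 = 1 + 2 / (n : ℝ) ↔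
      ∀ μ ∈ spectrum ℂ ((R * P).map (Complex.ofReal ·)),
        ∀ ν ∈ spectrum ℂ ((R * P).map (Complex.ofReal ·)), μ = ν) := by
  haveI : Nonempty (Fin n) := ⟨⟨0, by omega⟩⟩
  have hn0 : (n : ℝ) ≠ 0 := by positivity
  have ht : 0 < trace (R * P) := by
    obtain ⟨u, S, hS, hRP⟩ := aux_decomp hP hR
    have ht : trace (R * P) = trace S := by
      rw [hRP, Matrix.trace_mul_comm, ← mul_assoc]; simp
    rw [ht]
    exact hS.trace_pos
  have hRQ : R * Q = R * P * (R * P) + (1 / 2 * trace (R * P)) • (R * P) := by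
    conv_lhs => rw [← hric]
    rw [mul_add, Matrix.mul_smul]
    simp only [mul_assoc]
  have hratio : 2 * trace (R * Q) / (trace (R * P)) ^ 2 = 1 + 2 / (n : ℝ) ↔
      ∃ c : ℝ, R * P = c • (1 : Matrix (Fin n) (Fin n) ℝ) := by
    rw [← aux_trace hn hP hR, hRQ, trace_add, trace_smul, smul_eq_mul]
    generalize trace (R * P) = t at ht
    generalize trace (R * P * (R * P)) = s
    rw [div_eq_iff (by positivity)]
    constructor
    · intro h
      field_simp at h
      linarith
    · intro h
      field_simp
      linarith
  have hPQ : (∃ c : ℝ, R * P = c • (1 : Matrix (Fin n) (Fin n) ℝ)) ↔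
      ∃ c : ℝ, R * Q = c • (1 : Matrix (Fin n) (Fin n) ℝ) := by
    constructor
    · rintro ⟨c, hc⟩
      refine ⟨c * c + 1 / 2 * trace (R * P) * c, ?_⟩
      rw [hRQ]
      generalize trace (R * P) = t
      rw [hc]
      simp [smul_smul, add_smul]
    · rintro ⟨c, hc⟩
      have key : ∀ μ ∈ spectrum ℝ (R * P), μ ^ 2 + 1 / 2 * trace (R * P) * μ = c := by
        intro μ hμ
        rw [spectrum.mem_iff, Matrix.isUnit_iff_isUnit_det, isUnit_iff_ne_zero, not_not,
          ← Matrix.exists_mulVec_eq_zero_iff] at hμ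
        obtain ⟨v, hv, hv0⟩ := hμ
        have hv1 : (R * P) *ᵥ v = μ • v := by
          rw [sub_mulVec, sub_eq_zero, Algebra.algebraMap_eq_smul_one, smul_mulVec,
            one_mulVec] at hv0
          exact hv0.symm
        have h2 : (R * Q) *ᵥ v = c • v := by rw [hc, smul_mulVec, one_mulVec]
        rw [hRQ, add_mulVec, ← mulVec_mulVec, smul_mulVec, hv1, mulVec_smul, hv1, smul_smul,
          smul_smul, ← add_smul] at h2
        have h3 := smul_left_injective ℝ hv h2
        linarith
      refine aux_scalar hn hP hR fun μ hμ ν hν => ?_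
      have h1 := key μ hμ
      have h2 := key ν hν
      have p1 := aux_pos hP hR hμ
      have p2 := aux_pos hP hR hν
      have h3 : (μ - ν) * (μ + ν + 1 / 2 * trace (R * P)) = 0 := by linear_combination h1 - h2
      rcases mul_eq_zero.1 h3 with h | h
      · linarith
      · nlinarith
  exact ⟨by rw [aux_const hn hQ hR, ← hPQ, hratio], by rw [aux_const hn hP hR, hratio]⟩
end
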